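/- arXiv:math/0610136 — 3 statements merged into one kernel-verified Lean document; each statement's English description precedes it below -/
import Mathlib

section
/- Let X and Y be topological, locally convex real vector spaces in duality via a duality product ⟨·,·⟩ : X × Y → ℝ whose topologies are compatible with the duality. A nonempty set M ⊆ X × Y is the graph M(b) = {(x,y) ∈ X × Y : b(x,y) = ⟨x,y⟩} of some bipotential b : X × Y → ℝ ∪ {+∞} if and only if M is a BB-graph, i.e. for every x in the domain of M the slice m(x) = {y ∈ Y : (x,y) ∈ M} is convex and closed, and for every y in the image of M the slice m*(y) = {x ∈ X : (x,y) ∈ M} is convex and closed. -/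
/-!
Statement 0 (Buliga, de Saxcé, Vallée, "Construction of bipotentials and a
minimax theorem of Fan", Theorem 3.4): a nonempty set `M ⊆ X × Y` is the graph
of a bipotential if and only if `M` is a BB-graph.
-/

noncomputable section

/-- The Fenchel conjugate of an `ℝ ∪ {+∞}`-valued function `φ` on `X`,
with respect to a duality pairing `p : X → Y → ℝ`. -/
def econj {X Y : Type*} (p : X → Y → ℝ) (φ : X → EReal) (y : Y) : EReal :=
  ⨆ x : X, ((p x y : EReal) - φ x)

/-- The subdifferential of an `ℝ ∪ {+∞}`-valued function `φ` at a point `x` of its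
domain, with respect to a duality pairing `p : X → Y → ℝ`:
`∂φ(x) = {u ∈ Y : ∀ z, ⟨z - x, u⟩ ≤ φ(z) - φ(x)}` (empty if `φ x = +∞`). -/
def eSubdiff {X Y : Type*} (p : X → Y → ℝ) (φ : X → EReal) (x : X) : Set Y :=
  {u : Y | φ x ≠ ⊤ ∧ ∀ z : X, φ x + ((p z u - p x u : ℝ) : EReal) ≤ φ z}

/-- Convexity of an `ℝ ∪ {+∞}`-valued function on a real vector space. -/
def EConvex {V : Type*} [AddCommGroup V] [Module ℝ V] (f : V → EReal) : Prop :=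
  ∀ z₁ z₂ : V, ∀ α β : ℝ, 0 ≤ α → 0 ≤ β → α + β = 1 →
    f (α • z₁ + β • z₂) ≤ (α : EReal) * f z₁ + (β : EReal) * f z₂

/-- `b : X × Y → ℝ ∪ {+∞}` is a bipotential for the pairing `p` if it is convex and
lower semicontinuous in each argument, satisfies `b(x,y) ≥ ⟨x,y⟩`, and for all `(x,y)`
the conditions `y ∈ ∂b(·,y)(x)`, `x ∈ ∂b(x,·)(y)`, `b(x,y) = ⟨x,y⟩` are equivalent. -/
def IsBipotential {X Y : Type*} [AddCommGroup X] [Module ℝ X] [TopologicalSpace X]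
    [AddCommGroup Y] [Module ℝ Y] [TopologicalSpace Y]
    (p : X → Y → ℝ) (b : X → Y → EReal) : Prop :=
  (∀ y, EConvex fun x => b x y) ∧
  (∀ x, EConvex fun y => b x y) ∧
  (∀ y, LowerSemicontinuous fun x => b x y) ∧
  (∀ x, LowerSemicontinuous fun y => b x y) ∧
  (∀ x y, ((p x y : ℝ) : EReal) ≤ b x y) ∧
  (∀ x y, (y ∈ eSubdiff p (fun x' => b x' y) x ↔ b x y = ((p x y : ℝ) : EReal)) ∧
          (x ∈ eSubdiff (fun v u => p u v) (fun y' => b x y') y ↔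
            b x y = ((p x y : ℝ) : EReal)))

/-!
Since `b x y ≥ ⟨x, y⟩`, the graph of a bipotential `b` has slices `{y | b x y ≤ ⟨x, y⟩}` and
`{x | b x y ≤ ⟨x, y⟩}`, on which a convex lower semicontinuous function lies below a continuous
linear form; such sets are convex and closed. Conversely, the function equal to `⟨x, y⟩` on a
BB-graph `M` and to `+∞` elsewhere is a bipotential: each partial function is a linear form
restricted to a closed convex set, and each subdifferential condition merely says that
`(x, y) ∈ M`.
-/

open Set

section EConvex

variable {V : Type*} [AddCommGroup V] [Module ℝ V] {f : V → EReal}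

theorem EConvex.of_forall_pos
    (hf : ∀ u v : V, ∀ α β : ℝ, 0 < α → 0 < β → α + β = 1 →
      f (α • u + β • v) ≤ (α : EReal) * f u + (β : EReal) * f v) :
    EConvex f := by
  intro u v α β hα hβ hαβ
  rcases hα.eq_or_lt with rfl | hα
  · obtain rfl : β = 1 := by linarith
    simp
  rcases hβ.eq_or_lt with rfl | hβ
  · obtain rfl : α = 1 := by linarith
    simp
  exact hf u v α β hα hβ hαβ

theorem EConvex.convex_setOf_le (hf : EConvex f) {g : V → ℝ} (hg : ConcaveOn ℝ univ g) :
    Convex ℝ {v | f v ≤ (g v : EReal)} := by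
  intro u hu v hv α β hα hβ hαβ
  calc f (α • u + β • v) ≤ (α : EReal) * f u + (β : EReal) * f v := hf u v α β hα hβ hαβ
    _ ≤ (α : EReal) * (g u : EReal) + (β : EReal) * (g v : EReal) :=
      add_le_add (mul_le_mul_of_nonneg_left hu (EReal.coe_nonneg.2 hα))
        (mul_le_mul_of_nonneg_left hv (EReal.coe_nonneg.2 hβ))
    _ ≤ (g (α • u + β • v) : EReal) := by
      exact_mod_cast hg.2 (mem_univ u) (mem_univ v) hα hβ hαβ

end EConvex

theorem isClosed_setOf_le_of_lowerSemicontinuous {V : Type*} [TopologicalSpace V]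
    {f g : V → EReal} (hf : LowerSemicontinuous f) (hg : Continuous g) :
    IsClosed {v | f v ≤ g v} :=
  hf.isClosed_epigraph.preimage (continuous_id.prodMk hg)

theorem EConvex.convex_and_isClosed_setOf_eq {V : Type*} [AddCommGroup V] [Module ℝ V]
    [TopologicalSpace V] {f : V → EReal} (hf : EConvex f) (hfc : LowerSemicontinuous f)
    {g : V → ℝ} (hg : ConcaveOn ℝ univ g) (hgc : Continuous g) (hgf : ∀ v, (g v : EReal) ≤ f v) :
    Convex ℝ {v | f v = (g v : EReal)} ∧ IsClosed {v | f v = (g v : EReal)} := by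
  have heq : {v | f v = (g v : EReal)} = {v | f v ≤ (g v : EReal)} :=
    ext fun v => ⟨le_of_eq, fun h => h.antisymm (hgf v)⟩
  rw [heq]
  exact ⟨hf.convex_setOf_le hg,
    isClosed_setOf_le_of_lowerSemicontinuous hfc (continuous_coe_real_ereal.comp hgc)⟩

open Classical in
/-- The extension of `f|S` by `+∞`, i.e. the sum of `f` and the convex-analytic indicator function
of `S`. -/
def extendByTop {V : Type*} (S : Set V) (f : V → ℝ) : V → EReal :=
  S.piecewise (fun v => (f v : EReal)) ⊤

namespace extendByTop

variable {V : Type*} {S : Set V} {f : V → ℝ} {v : V}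

theorem of_mem (hv : v ∈ S) : extendByTop S f v = (f v : EReal) := by
  classical exact piecewise_eq_of_mem S _ _ hv

theorem of_notMem (hv : v ∉ S) : extendByTop S f v = ⊤ := by
  classical exact piecewise_eq_of_notMem S _ _ hv

theorem coe_le (S : Set V) (f : V → ℝ) (v : V) : (f v : EReal) ≤ extendByTop S f v := by
  by_cases hv : v ∈ S
  · exact (of_mem hv).ge
  · exact le_top.trans_eq (of_notMem hv).symm

theorem ne_bot (S : Set V) (f : V → ℝ) (v : V) : extendByTop S f v ≠ ⊥ :=
  ne_bot_of_le_ne_bot (EReal.coe_ne_bot _) (coe_le S f v)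

theorem ne_top_iff : extendByTop S f v ≠ ⊤ ↔ v ∈ S :=
  ⟨not_imp_comm.1 of_notMem, fun hv => of_mem hv ▸ EReal.coe_ne_top _⟩

theorem eq_coe_iff : extendByTop S f v = (f v : EReal) ↔ v ∈ S :=
  ⟨fun h => ne_top_iff.1 (h ▸ EReal.coe_ne_top _), of_mem⟩

theorem eConvex [AddCommGroup V] [Module ℝ V] (hf : ConvexOn ℝ S f) :
    EConvex (extendByTop S f) := by
  refine .of_forall_pos fun u v α β hα hβ hαβ => ?_
  have mul_ne_bot {γ : ℝ} (hγ : 0 < γ) (w : V) : (γ : EReal) * extendByTop S f w ≠ ⊥ := by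
    simp [EReal.mul_eq_bot, ne_bot, hγ.le]
  by_cases hu : u ∈ S
  · by_cases hv : v ∈ S
    · rw [of_mem hu, of_mem hv, of_mem (hf.1 hu hv hα.le hβ.le hαβ)]
      exact_mod_cast hf.2 hu hv hα.le hβ.le hαβ
    · rw [of_notMem hv, EReal.coe_mul_top_of_pos hβ, EReal.add_top_of_ne_bot (mul_ne_bot hα u)]
      exact le_top
  · rw [of_notMem hu, EReal.coe_mul_top_of_pos hα, EReal.top_add_of_ne_bot (mul_ne_bot hβ v)]
    exact le_top

theorem lowerSemicontinuous [TopologicalSpace V] (hS : IsClosed S)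
    (hf : LowerSemicontinuousOn f S) : LowerSemicontinuous (extendByTop S f) := by
  have hcoe : LowerSemicontinuousOn (fun w => (f w : EReal)) S :=
    continuous_coe_real_ereal.comp_lowerSemicontinuousOn hf EReal.coe_strictMono.monotone
  intro v r hr
  by_cases hv : v ∈ S
  · rw [of_mem hv] at hr
    filter_upwards [eventually_nhdsWithin_iff.1 (hcoe v hv r hr)] with w hw
    by_cases hwS : w ∈ S
    · exact (hw hwS).trans_le (coe_le S f w)
    · exact of_notMem hwS ▸ hr.trans_le le_top
  · filter_upwards [hS.isOpen_compl.mem_nhds hv] with w hw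
    rwa [of_notMem hw, ← of_notMem hv]

theorem mem_eSubdiff_iff {X Y : Type*} {p : X → Y → ℝ} {S : Set X} {x : X} {y : Y} :
    y ∈ eSubdiff p (extendByTop S fun x' => p x' y) x ↔ x ∈ S := by
  refine ⟨fun h => ne_top_iff.1 h.1, fun hx => ⟨ne_top_iff.2 hx, fun z => ?_⟩⟩
  rw [of_mem hx, ← EReal.coe_add, add_sub_cancel]
  exact coe_le S (fun x' => p x' y) z

end extendByTop

/-- The largest candidate for a bipotential with graph `M`: the pairing on `M`, and `+∞` off `M`. -/
def graphPotential {X Y : Type*} (p : X → Y → ℝ) (M : Set (X × Y)) (x : X) (y : Y) : EReal :=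
  extendByTop M (fun z => p z.1 z.2) (x, y)

section Bipotential

variable {X Y : Type*}

theorem graphPotential_eq_coe_iff {p : X → Y → ℝ} {M : Set (X × Y)} {x : X} {y : Y} :
    graphPotential p M x y = (p x y : EReal) ↔ (x, y) ∈ M :=
  extendByTop.eq_coe_iff (f := fun z : X × Y => p z.1 z.2)

variable [AddCommGroup X] [Module ℝ X] [TopologicalSpace X]
  [AddCommGroup Y] [Module ℝ Y] [TopologicalSpace Y]
  {p : X →ₗ[ℝ] Y →ₗ[ℝ] ℝ}

theorem isBipotential_graphPotential {M : Set (X × Y)}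
    (hcX : ∀ y, Continuous fun x => p x y) (hcY : ∀ x, Continuous fun y => p x y)
    (hY : ∀ x, Convex ℝ {y | (x, y) ∈ M} ∧ IsClosed {y | (x, y) ∈ M})
    (hX : ∀ y, Convex ℝ {x | (x, y) ∈ M} ∧ IsClosed {x | (x, y) ∈ M}) :
    IsBipotential (fun x y => p x y) (graphPotential (fun x y => p x y) M) := by
  have hsliceX (y : Y) : (fun x => graphPotential (fun x y => p x y) M x y) =
      extendByTop {x | (x, y) ∈ M} fun x => p x y := rfl
  have hsliceY (x : X) : (fun y => graphPotential (fun x y => p x y) M x y) =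
      extendByTop {y | (x, y) ∈ M} fun y => p x y := rfl
  refine ⟨fun y => ?_, fun x => ?_, fun y => ?_, fun x => ?_,
    fun x y => extendByTop.coe_le M (fun z => p z.1 z.2) (x, y), fun x y => ⟨?_, ?_⟩⟩
  · exact hsliceX y ▸ extendByTop.eConvex ((p.flip y).convexOn (hX y).1)
  · exact hsliceY x ▸ extendByTop.eConvex ((p x).convexOn (hY x).1)
  · exact hsliceX y ▸
      extendByTop.lowerSemicontinuous (hX y).2 (hcX y).continuousOn.lowerSemicontinuousOn
  · exact hsliceY x ▸
      extendByTop.lowerSemicontinuous (hY x).2 (hcY x).continuousOn.lowerSemicontinuousOn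
  · rw [hsliceX, graphPotential_eq_coe_iff (p := fun x y => p x y)]
    exact extendByTop.mem_eSubdiff_iff (p := fun x y => p x y)
  · rw [hsliceY, graphPotential_eq_coe_iff (p := fun x y => p x y)]
    exact extendByTop.mem_eSubdiff_iff (p := fun y x => p x y)

theorem IsBipotential.convex_and_isClosed_slices {b : X → Y → EReal}
    (hb : IsBipotential (fun x y => p x y) b)
    (hcX : ∀ y, Continuous fun x => p x y) (hcY : ∀ x, Continuous fun y => p x y) :
    (∀ x, Convex ℝ {y | b x y = (p x y : EReal)} ∧ IsClosed {y | b x y = (p x y : EReal)}) ∧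
      ∀ y, Convex ℝ {x | b x y = (p x y : EReal)} ∧ IsClosed {x | b x y = (p x y : EReal)} := by
  obtain ⟨hconvX, hconvY, hlscX, hlscY, hle, -⟩ := hb
  exact ⟨fun x => (hconvY x).convex_and_isClosed_setOf_eq (hlscY x)
      ((p x).concaveOn convex_univ) (hcY x) (hle x),
    fun y => (hconvX y).convex_and_isClosed_setOf_eq (hlscX y)
      ((p.flip y).concaveOn convex_univ) (hcX y) fun x => hle x y⟩

end Bipotential

theorem convex_and_isClosed_of_nonempty_imp {V : Type*} [AddCommGroup V] [Module ℝ V]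
    [TopologicalSpace V] {S : Set V} (hS : S.Nonempty → Convex ℝ S ∧ IsClosed S) :
    Convex ℝ S ∧ IsClosed S := by
  rcases S.eq_empty_or_nonempty with rfl | hne
  · exact ⟨convex_empty, isClosed_empty⟩
  · exact hS hne

theorem bipotential_exists_iff_BBGraph_general {X Y : Type*}
    [AddCommGroup X] [Module ℝ X] [TopologicalSpace X]
    [AddCommGroup Y] [Module ℝ Y] [TopologicalSpace Y]
    (p : X →ₗ[ℝ] Y →ₗ[ℝ] ℝ)
    (hcX : ∀ y : Y, Continuous fun x : X => p x y)
    (hcY : ∀ x : X, Continuous fun y : Y => p x y)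
    (M : Set (X × Y)) :
    (∃ b : X → Y → EReal, IsBipotential (fun x y => p x y) b ∧
        M = {z : X × Y | b z.1 z.2 = ((p z.1 z.2 : ℝ) : EReal)}) ↔
      ((∀ x : X, (∃ y, (x, y) ∈ M) →
          Convex ℝ {y : Y | (x, y) ∈ M} ∧ IsClosed {y : Y | (x, y) ∈ M}) ∧
       (∀ y : Y, (∃ x, (x, y) ∈ M) →
          Convex ℝ {x : X | (x, y) ∈ M} ∧ IsClosed {x : X | (x, y) ∈ M})) := by
  constructor
  · rintro ⟨b, hb, rfl⟩
    obtain ⟨hY, hX⟩ := hb.convex_and_isClosed_slices hcX hcY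
    exact ⟨fun x _ => hY x, fun y _ => hX y⟩
  · rintro ⟨hY, hX⟩
    refine ⟨graphPotential (fun x y => p x y) M,
      isBipotential_graphPotential hcX hcY
        (fun x => convex_and_isClosed_of_nonempty_imp (hY x))
        (fun y => convex_and_isClosed_of_nonempty_imp (hX y)), ?_⟩
    ext ⟨x, y⟩
    exact (graphPotential_eq_coe_iff (p := fun x y => p x y)).symm

/-- Let `X`, `Y` be locally convex topological real vector spaces in
duality via a bilinear pairing `p`, the topologies being compatible with the duality
(the pairing is separately continuous and every continuous linear functional is
represented by the pairing). A nonempty `M ⊆ X × Y` is the graph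
`M(b) = {(x,y) : b(x,y) = ⟨x,y⟩}` of some bipotential `b` if and only if `M` is a
BB-graph: all slices `m(x) = {y : (x,y) ∈ M}` for `x ∈ dom M` and
`m*(y) = {x : (x,y) ∈ M}` for `y ∈ im M` are convex and closed. -/
theorem bipotential_exists_iff_BBGraph {X Y : Type*}
    [AddCommGroup X] [Module ℝ X] [TopologicalSpace X] [IsTopologicalAddGroup X]
    [ContinuousSMul ℝ X] [LocallyConvexSpace ℝ X]
    [AddCommGroup Y] [Module ℝ Y] [TopologicalSpace Y] [IsTopologicalAddGroup Y]
    [ContinuousSMul ℝ Y] [LocallyConvexSpace ℝ Y]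
    (p : X →ₗ[ℝ] Y →ₗ[ℝ] ℝ)
    (hcX : ∀ y : Y, Continuous fun x : X => p x y)
    (hcY : ∀ x : X, Continuous fun y : Y => p x y)
    (hrX : ∀ ℓ : X →L[ℝ] ℝ, ∃ y : Y, ∀ x : X, ℓ x = p x y)
    (hrY : ∀ ℓ : Y →L[ℝ] ℝ, ∃ x : X, ∀ y : Y, ℓ y = p x y)
    (M : Set (X × Y)) (hM : M.Nonempty) :
    (∃ b : X → Y → EReal, IsBipotential (fun x y => p x y) b ∧
        M = {z : X × Y | b z.1 z.2 = ((p z.1 z.2 : ℝ) : EReal)}) ↔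
      ((∀ x : X, (∃ y, (x, y) ∈ M) →
          Convex ℝ {y : Y | (x, y) ∈ M} ∧ IsClosed {y : Y | (x, y) ∈ M}) ∧
       (∀ y : Y, (∃ x, (x, y) ∈ M) →
          Convex ℝ {x : X | (x, y) ∈ M} ∧ IsClosed {x : X | (x, y) ∈ M})) :=
  bipotential_exists_iff_BBGraph_general p hcX hcY M
end
end

section
/- Let H be a real Hilbert space, with duality product equal to the inner product. Then the Cauchy bipotential b : H × H → ℝ, b(x,y) = ‖x‖·‖y‖, is a bipotential; moreover its graph M(b) = {(x,y) : ‖x‖·‖y‖ = ⟨x,y⟩} consists exactly of the pairs (x,y) such that x = 0, or y = 0, or y = λx for some λ > 0. -/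
/-!
Statement 5 (Buliga, de Saxcé, Vallée, Example 2): the Cauchy bipotential
`b(x,y) = ‖x‖ ‖y‖` on a real Hilbert space, and the description of its graph.
-/

noncomputable section

/-!
If `⟨·, y⟩` minorizes a function and touches it somewhere, then `y` is a subgradient of that
function exactly at the contact points. By Cauchy–Schwarz, `⟨·, y⟩` minorizes `‖·‖ * ‖y‖` and
touches it at the origin, so membership in either partial subdifferential at `(x, y)` means contact
at `(x, y)`, that is, equality in Cauchy–Schwarz. Equality holds precisely when `x` and `y` lie on
the same ray.
-/

theorem eConvex_coe_iff {V : Type*} [AddCommGroup V] [Module ℝ V] {f : V → ℝ} :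
    EConvex (fun x => (f x : EReal)) ↔ ConvexOn ℝ Set.univ f := by
  simp only [EConvex, ConvexOn, convex_univ, Set.mem_univ, smul_eq_mul, true_and,
    forall_const, ← EReal.coe_mul, ← EReal.coe_add, EReal.coe_le_coe_iff]

theorem mem_eSubdiff_iff_eq_of_forall_le {X Y : Type*} {p : X → Y → ℝ} {φ : X → EReal} {y : Y}
    (hle : ∀ z, (p z y : EReal) ≤ φ z) {x₀ : X} (hx₀ : φ x₀ = p x₀ y) (x : X) :
    y ∈ eSubdiff p φ x ↔ φ x = p x y := by
  constructor
  · rintro ⟨hx_top, hx⟩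
    have hx_bot : φ x ≠ ⊥ := ne_bot_of_le_ne_bot (EReal.coe_ne_bot _) (hle x)
    have h_at_contact : φ x + ((p x₀ y - p x y : ℝ) : EReal) ≤ p x₀ y := hx₀ ▸ hx x₀
    refine le_antisymm ?_ (hle x)
    lift φ x to ℝ using ⟨hx_top, hx_bot⟩ with r
    norm_cast at h_at_contact ⊢
    linarith
  · intro hx
    refine ⟨hx ▸ EReal.coe_ne_top _, fun z => ?_⟩
    calc φ x + ((p z y - p x y : ℝ) : EReal) = p z y := by
          rw [hx, ← EReal.coe_add, add_sub_cancel]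
      _ ≤ φ z := hle z

theorem isBipotential_norm_mul_norm {E F : Type*} [SeminormedAddCommGroup E] [NormedSpace ℝ E]
    [SeminormedAddCommGroup F] [NormedSpace ℝ F] (B : E →ₗ[ℝ] F →ₗ[ℝ] ℝ)
    (hB : ∀ x y, B x y ≤ ‖x‖ * ‖y‖) :
    IsBipotential (fun x y => B x y) (fun x y => ((‖x‖ * ‖y‖ : ℝ) : EReal)) := by
  have hB' (x : E) (y : F) : (B x y : EReal) ≤ (‖x‖ * ‖y‖ : ℝ) := EReal.coe_le_coe (hB x y)
  refine ⟨fun y => ?convex_left, fun x => ?convex_right, fun y => ?lsc_left, fun x => ?lsc_right,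
    hB', fun x y => ⟨?subdiff_left, ?subdiff_right⟩⟩
  case convex_left =>
    simpa only [smul_eq_mul, mul_comm] using
      eConvex_coe_iff.2 ((convexOn_univ_norm (E := E)).smul (norm_nonneg y))
  case convex_right => exact eConvex_coe_iff.2 (convexOn_univ_norm.smul (norm_nonneg x))
  case lsc_left => exact (continuous_coe_real_ereal.comp (by fun_prop)).lowerSemicontinuous
  case lsc_right => exact (continuous_coe_real_ereal.comp (by fun_prop)).lowerSemicontinuous
  case subdiff_left =>
    exact mem_eSubdiff_iff_eq_of_forall_le (fun z => hB' z y) (x₀ := 0) (by simp) x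
  case subdiff_right =>
    exact mem_eSubdiff_iff_eq_of_forall_le (fun z => hB' x z) (x₀ := 0) (by simp) y

theorem sameRay_iff_exists_pos_eq_smul {R M : Type*} [Field R] [LinearOrder R]
    [IsStrictOrderedRing R] [AddCommGroup M] [Module R M] {x y : M} :
    SameRay R x y ↔ x = 0 ∨ y = 0 ∨ ∃ r : R, 0 < r ∧ y = r • x := by
  rcases eq_or_ne x 0 with rfl | hx
  · simp
  rcases eq_or_ne y 0 with rfl | hy
  · simp
  simp only [hx, hy, false_or, eq_comm (a := y), exists_pos_left_iff_sameRay hx hy]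

theorem real_inner_eq_norm_mul_norm_iff_sameRay {E : Type*} [NormedAddCommGroup E]
    [InnerProductSpace ℝ E] {x y : E} : inner ℝ x y = ‖x‖ * ‖y‖ ↔ SameRay ℝ x y := by
  rw [inner_eq_norm_mul_iff_real, sameRay_iff_norm_smul_eq, eq_comm]

theorem cauchy_bipotential_general {H : Type*} [NormedAddCommGroup H] [InnerProductSpace ℝ H] :
    IsBipotential (fun x y : H => (inner ℝ x y : ℝ))
        (fun x y : H => ((‖x‖ * ‖y‖ : ℝ) : EReal)) ∧
      {z : H × H | ‖z.1‖ * ‖z.2‖ = (inner ℝ z.1 z.2 : ℝ)} =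
        {z : H × H | z.1 = 0 ∨ z.2 = 0 ∨ ∃ l : ℝ, 0 < l ∧ z.2 = l • z.1} := by
  refine ⟨isBipotential_norm_mul_norm (innerₗ H) real_inner_le_norm, ?_⟩
  ext z
  exact eq_comm.trans
    (real_inner_eq_norm_mul_norm_iff_sameRay.trans sameRay_iff_exists_pos_eq_smul)

/-- Let `H` be a real Hilbert space, the duality product being the
inner product. Then the Cauchy bipotential `b(x,y) = ‖x‖ ‖y‖` is a bipotential, and
its graph `M(b) = {(x,y) : ‖x‖ ‖y‖ = ⟨x,y⟩}` consists exactly of the pairs `(x,y)`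
with `x = 0`, or `y = 0`, or `y = λ x` for some `λ > 0`. -/
theorem cauchy_bipotential {H : Type*}
    [NormedAddCommGroup H] [InnerProductSpace ℝ H] [CompleteSpace H] :
    IsBipotential (fun x y : H => (inner ℝ x y : ℝ))
        (fun x y : H => ((‖x‖ * ‖y‖ : ℝ) : EReal)) ∧
      {z : H × H | ‖z.1‖ * ‖z.2‖ = (inner ℝ z.1 z.2 : ℝ)} =
        {z : H × H | z.1 = 0 ∨ z.2 = 0 ∨ ∃ l : ℝ, 0 < l ∧ z.2 = l • z.1} :=
  cauchy_bipotential_general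
end
end

section
/- Let H be a nonzero real Hilbert space and let M = {(x,y) ∈ H × H : ‖x‖·‖y‖ = ⟨x,y⟩} be the graph of the Cauchy bipotential b(x,y) = ‖x‖·‖y‖. Then M is not a monotone graph: there exist (x₁,y₁), (x₂,y₂) ∈ M with ⟨x₁ − x₂, y₁ − y₂⟩ < 0. In particular M is not cyclically monotone, hence there is no convex lower semicontinuous φ : H → ℝ ∪ {+∞} with M = {(x,y) : φ(x) + φ*(y) = ⟨x,y⟩}; i.e. M cannot be expressed by a separable bipotential. -/
/-!
Statement 6 (Buliga, de Saxcé, Vallée): the graph of the Cauchy bipotential on a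
nonzero real Hilbert space is not monotone, hence not cyclically monotone, hence
it is not the graph `M(φ) = {(x,y) : φ(x) + φ*(y) = ⟨x,y⟩}` of any convex lower
semicontinuous `φ : H → ℝ ∪ {+∞}`; i.e. it cannot be expressed by a separable
bipotential.
-/

noncomputable section

/-- A set `M ⊆ H × H` is cyclically monotone if for every finite cycle
`(x₀,y₀), (x₁,y₁), …, (x_n,y_n) = (x₀,y₀)` in `M` one has
`∑_{i=0}^{n-1} ⟨x_{i+1} − x_i, y_i⟩ ≤ 0`. -/
def CyclicallyMonotone {H : Type*} [NormedAddCommGroup H] [InnerProductSpace ℝ H]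
    (M : Set (H × H)) : Prop :=
  ∀ (n : ℕ) (z : ℕ → H × H), (∀ i ≤ n, z i ∈ M) → z n = z 0 →
    ∑ i ∈ Finset.range n, (inner ℝ ((z (i + 1)).1 - (z i).1) ((z i).2) : ℝ) ≤ 0

/-!
The pairs `(x, 0)` and `(0, x)` both lie in the graph of the Cauchy bipotential, and for `x ≠ 0`
they violate monotonicity, since `⟨x - 0, 0 - x⟩ = -‖x‖²`. On the other hand, equality
`φ x + φ* y = ⟨x, y⟩` makes `y` a subgradient of `φ` at `x`, so that along a cycle the sum of the
`⟨x_{i+1} - x_i, y_i⟩` is dominated by the telescoping sum of the `φ x_{i+1} - φ x_i`.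
-/

theorem CyclicallyMonotone.inner_sub_nonneg {H : Type*} [NormedAddCommGroup H]
    [InnerProductSpace ℝ H] {M : Set (H × H)} (hM : CyclicallyMonotone M) {z₁ z₂ : H × H}
    (h₁ : z₁ ∈ M) (h₂ : z₂ ∈ M) : 0 ≤ (inner ℝ (z₁.1 - z₂.1) (z₁.2 - z₂.2) : ℝ) := by
  have hcycle : (inner ℝ (z₂.1 - z₁.1) z₁.2 : ℝ) + inner ℝ (z₁.1 - z₂.1) z₂.2 ≤ 0 := by
    simpa [Finset.sum_range_succ] using
      hM 2 (fun i => if i = 1 then z₂ else z₁) (fun i _ => by split_ifs <;> assumption) (by simp)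
  simp only [inner_sub_left, inner_sub_right] at hcycle ⊢
  linarith

theorem exists_eq_coe_of_add_eq_coe {a b : EReal} {r : ℝ} (h : a + b = r) :
    ∃ s t : ℝ, a = s ∧ b = t ∧ s + t = r := by
  induction a <;> induction b <;> first | exact ⟨_, _, rfl, rfl, mod_cast h⟩ | simp at h

section Fenchel

variable {X Y : Type*} {p : X → Y → ℝ} {φ : X → EReal}

/-- The equality set `M(φ) = {(x, y) : φ x + φ* y = p x y}` of the Fenchel–Young inequality, that
is, the graph of the separable bipotential `(x, y) ↦ φ x + φ* y`. Membership forces both `φ x` and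
`φ* y` to be finite, because in `EReal` a sum with an infinite term is infinite. -/
def fenchelGraph (p : X → Y → ℝ) (φ : X → EReal) : Set (X × Y) :=
  {z | φ z.1 + econj p φ z.2 = (p z.1 z.2 : EReal)}

theorem pairing_le_add_of_econj_eq {x : X} {y : Y} {s t : ℝ} (hs : φ x = s)
    (ht : econj p φ y = t) : p x y ≤ s + t := by
  have h : (p x y : EReal) - φ x ≤ econj p φ y := le_iSup (fun x => (p x y : EReal) - φ x) x
  rw [hs, ht, ← EReal.coe_sub, EReal.coe_le_coe_iff] at h
  linarith

theorem pairing_sub_le_of_mem_fenchelGraph {z w : X × Y} (hz : z ∈ fenchelGraph p φ)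
    (hw : w ∈ fenchelGraph p φ) :
    p w.1 z.2 - p z.1 z.2 ≤ (φ w.1).toReal - (φ z.1).toReal := by
  obtain ⟨s, t, hs, ht, hst⟩ := exists_eq_coe_of_add_eq_coe hz
  obtain ⟨s', -, hs', -⟩ := exists_eq_coe_of_add_eq_coe hw
  have hyoung : p w.1 z.2 ≤ s' + t := pairing_le_add_of_econj_eq hs' ht
  rw [hs, hs', EReal.toReal_coe, EReal.toReal_coe]
  linarith

theorem sum_pairing_sub_le_of_mem_fenchelGraph {n : ℕ} {z : ℕ → X × Y}
    (hz : ∀ i ≤ n, z i ∈ fenchelGraph p φ) :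
    ∑ i ∈ Finset.range n, (p (z (i + 1)).1 (z i).2 - p (z i).1 (z i).2) ≤
      (φ (z n).1).toReal - (φ (z 0).1).toReal := by
  rw [← Finset.sum_range_sub fun i => (φ (z i).1).toReal]
  refine Finset.sum_le_sum fun i hi => ?_
  have hi : i < n := Finset.mem_range.mp hi
  exact pairing_sub_le_of_mem_fenchelGraph (hz i hi.le) (hz (i + 1) hi)

end Fenchel

section InnerProductSpace

variable {H : Type*} [NormedAddCommGroup H] [InnerProductSpace ℝ H]

theorem cyclicallyMonotone_fenchelGraph (φ : H → EReal) :
    CyclicallyMonotone (fenchelGraph (inner ℝ) φ) := by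
  intro n z hz hzn
  simpa only [inner_sub_left, hzn, sub_self] using sum_pairing_sub_le_of_mem_fenchelGraph hz

variable (H)

/-- The graph `{(x, y) : ‖x‖ ‖y‖ = ⟨x, y⟩}` of the Cauchy bipotential `(x, y) ↦ ‖x‖ ‖y‖`, that is,
the equality set of the Cauchy–Schwarz inequality. -/
def cauchyGraph : Set (H × H) :=
  {z | ‖z.1‖ * ‖z.2‖ = (inner ℝ z.1 z.2 : ℝ)}

theorem exists_mem_cauchyGraph_inner_sub_neg [Nontrivial H] :
    ∃ z₁ ∈ cauchyGraph H, ∃ z₂ ∈ cauchyGraph H,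
      (inner ℝ (z₁.1 - z₂.1) (z₁.2 - z₂.2) : ℝ) < 0 := by
  obtain ⟨x, hx⟩ := exists_ne (0 : H)
  have hneg : (inner ℝ (x - 0) (0 - x) : ℝ) < 0 := by simpa [sq_pos_iff] using hx
  exact ⟨(x, 0), by simp [cauchyGraph], (0, x), by simp [cauchyGraph], hneg⟩

theorem not_cyclicallyMonotone_cauchyGraph [Nontrivial H] :
    ¬ CyclicallyMonotone (cauchyGraph H) := by
  obtain ⟨z₁, h₁, z₂, h₂, hneg⟩ := exists_mem_cauchyGraph_inner_sub_neg H
  exact fun hM => (hM.inner_sub_nonneg h₁ h₂).not_gt hneg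

theorem cauchy_graph_not_monotone_general [Nontrivial H] :
    (∃ z₁ ∈ cauchyGraph H, ∃ z₂ ∈ cauchyGraph H,
      (inner ℝ (z₁.1 - z₂.1) (z₁.2 - z₂.2) : ℝ) < 0) ∧
    ¬ CyclicallyMonotone (cauchyGraph H) ∧
    ∀ φ : H → EReal, cauchyGraph H ≠ fenchelGraph (inner ℝ) φ :=
  ⟨exists_mem_cauchyGraph_inner_sub_neg H, not_cyclicallyMonotone_cauchyGraph H,
    fun φ hφ => not_cyclicallyMonotone_cauchyGraph H (hφ ▸ cyclicallyMonotone_fenchelGraph φ)⟩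

end InnerProductSpace

/-- Let `H` be a nonzero real Hilbert space and
`M = {(x,y) : ‖x‖ ‖y‖ = ⟨x,y⟩}` the graph of the Cauchy bipotential. Then `M` is not
monotone: there are `(x₁,y₁), (x₂,y₂) ∈ M` with `⟨x₁ − x₂, y₁ − y₂⟩ < 0`. In
particular `M` is not cyclically monotone, and there is no convex lower
semicontinuous `φ : H → ℝ ∪ {+∞}` with `M = {(x,y) : φ(x) + φ*(y) = ⟨x,y⟩}`. -/
theorem cauchy_graph_not_monotone {H : Type*}
    [NormedAddCommGroup H] [InnerProductSpace ℝ H] [CompleteSpace H] [Nontrivial H] :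
    (∃ z₁ ∈ {z : H × H | ‖z.1‖ * ‖z.2‖ = (inner ℝ z.1 z.2 : ℝ)},
      ∃ z₂ ∈ {z : H × H | ‖z.1‖ * ‖z.2‖ = (inner ℝ z.1 z.2 : ℝ)},
        (inner ℝ (z₁.1 - z₂.1) (z₁.2 - z₂.2) : ℝ) < 0) ∧
    ¬ CyclicallyMonotone {z : H × H | ‖z.1‖ * ‖z.2‖ = (inner ℝ z.1 z.2 : ℝ)} ∧
    ¬ ∃ φ : H → EReal, EConvex φ ∧ LowerSemicontinuous φ ∧
        {z : H × H | ‖z.1‖ * ‖z.2‖ = (inner ℝ z.1 z.2 : ℝ)} =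
          {z : H × H | φ z.1 + econj (fun a b : H => (inner ℝ a b : ℝ)) φ z.2 =
            ((inner ℝ z.1 z.2 : ℝ) : EReal)} := by
  obtain ⟨hneg, hcyc, hne⟩ := cauchy_graph_not_monotone_general H
  exact ⟨hneg, hcyc, fun ⟨φ, _, _, hφ⟩ => hne φ hφ⟩
end
end
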